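/- Under the LCC setup, for every m and every bounded linear operator L : X_m → X_m, the sequence j ↦ w_{m+j}(L) converges and lim_{j→∞} w_{m+j}(L) = ν(ι ∘ L ∘ Q_m), where ν(ι ∘ L ∘ Q_m) is the numerical radius in X of the operator x ↦ L(Q_m x) (regarded as an operator on X via the inclusion ι : X_m ⊆ X). -/

import Mathlib

open Filter Topology

variable {X : Type*} [NormedAddCommGroup X] [NormedSpace ℝ X]

/-- The numerical radius of a bounded linear operator on a real normed space. -/
noncomputable def nu {Z : Type*} [NormedAddCommGroup Z] [NormedSpace ℝ Z] (T : Z →L[ℝ] Z) : ℝ :=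
  sSup {r : ℝ | ∃ (x : Z) (f : Z →L[ℝ] ℝ), ‖x‖ = 1 ∧ ‖f‖ = 1 ∧ f x = 1 ∧ r = |f (T x)|}

/-- The numerical index of a real normed space. -/
noncomputable def nIndex (Z : Type*) [NormedAddCommGroup Z] [NormedSpace ℝ Z] : ℝ :=
  sInf {r : ℝ | ∃ T : Z →L[ℝ] Z, ‖T‖ = 1 ∧ r = nu T}

/-- The (continuous) inclusion map between nested submodules. -/
noncomputable def incl {p q : Submodule ℝ X} (h : p ≤ q) : p →L[ℝ] q :=
  (Submodule.inclusion h).mkContinuous 1 (fun x => by rw [one_mul]; exact le_of_eq rfl)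

/-- `QQ Xm P m j = Q_{m,j} = P_m ∘ P_{m+1} ∘ ⋯ ∘ P_{m+j-1} : X_{m+j} → X_m`
(with `Q_{m,0} = id`). -/
noncomputable def QQ (Xm : ℕ → Submodule ℝ X) (P : ∀ m, Xm (m + 1) →L[ℝ] Xm m) (m : ℕ) :
    ∀ j, Xm (m + j) →L[ℝ] Xm m
  | 0 => ContinuousLinearMap.id ℝ (Xm m)
  | (j + 1) => (QQ Xm P m j).comp (P (m + j))

/-- `w Xm hmono P m j L = w_{m+j}(L) = ν(ι ∘ L ∘ Q_{m,j})`, the numerical radius in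
`X_{m+j}` of the operator `x ↦ L (Q_{m,j} x)`. -/
noncomputable def w (Xm : ℕ → Submodule ℝ X) (hmono : Monotone Xm)
    (P : ∀ m, Xm (m + 1) →L[ℝ] Xm m) (m j : ℕ) (L : Xm m →L[ℝ] Xm m) : ℝ :=
  nu ((incl (hmono (Nat.le_add_right m j))).comp (L.comp (QQ Xm P m j)))

/-- The Local Characterization Condition (LCC): for every `m`, every norming functional
`f ∈ X_{m+1}*` of a unit vector `x ∈ X_{m+1}`, some multiple of `f` restricted to `X_m`
is a norming functional for `P_m x` in `X_m*`. -/
def LCC (Xm : ℕ → Submodule ℝ X) (hmono : Monotone Xm)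
    (P : ∀ m, Xm (m + 1) →L[ℝ] Xm m) : Prop :=
  ∀ (m : ℕ) (x : Xm (m + 1)) (f : Xm (m + 1) →L[ℝ] ℝ), ‖x‖ = 1 → ‖f‖ = 1 → f x = 1 →
    ∃ b : ℝ, ‖b • f.comp (incl (hmono (Nat.le_succ m)))‖ = 1 ∧
      b * f (incl (hmono (Nat.le_succ m)) (P m x)) = ‖P m x‖

/-!
For `0 ≤ c`, the bound `ν(T) ≤ c` is equivalent to the family of norm inequalities
`‖z‖ ≤ ‖z + t T z‖ + |t| c ‖z‖` (`nu_le_iff`). These mention no functionals, so they pass to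
every `T`-invariant subspace and, being closed conditions on `z`, pass back from a dense union of
such subspaces to the whole space. As `Q_m` extends `Q_{m,j}`, the operator `ι ∘ L ∘ Q_m` leaves
`X_{m+j}` invariant and restricts there to `ι ∘ L ∘ Q_{m,j}`; hence `w_{m+j}(L)` increases with `j`
to its supremum `ν(ι ∘ L ∘ Q_m)`.
-/

lemma le_of_forall_pos_mul_le_mul_add_sq {a c K : ℝ}
    (h : ∀ t, 0 < t → t * a ≤ t * c + t ^ 2 * K) : a ≤ c := by
  have hlim : Tendsto (fun t : ℝ => c + t * K) (𝓝[>] 0) (𝓝 c) := by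
    have hcont : Continuous fun t : ℝ => c + t * K := by fun_prop
    simpa using (hcont.tendsto 0).mono_left nhdsWithin_le_nhds
  refine ge_of_tendsto hlim (eventually_mem_nhdsWithin.mono fun t ht => ?_)
  exact le_of_mul_le_mul_left ((h t ht).trans_eq (by ring)) ht

lemma abs_le_of_forall_mul_le_abs_mul_add_sq {a c K : ℝ}
    (h : ∀ t, t * a ≤ |t| * c + t ^ 2 * K) : |a| ≤ c := by
  refine abs_le'.mpr ⟨le_of_forall_pos_mul_le_mul_add_sq (K := K) fun t ht => ?_,
    le_of_forall_pos_mul_le_mul_add_sq (K := K) fun t ht => ?_⟩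
  · simpa only [abs_of_pos ht] using h t
  · simpa only [abs_neg, abs_of_pos ht, neg_sq, neg_mul, mul_neg] using h (-t)

section NumericalRadius

variable {Z : Type*} [NormedAddCommGroup Z] [NormedSpace ℝ Z] (T : Z →L[ℝ] Z)

lemma nu_nonneg : 0 ≤ nu T := by
  refine Real.sSup_nonneg ?_
  rintro _ ⟨x, f, -, -, -, rfl⟩
  exact abs_nonneg _

lemma abs_apply_le_nu {x : Z} {f : Z →L[ℝ] ℝ} (hx : ‖x‖ = 1) (hf : ‖f‖ = 1) (hfx : f x = 1) :
    |f (T x)| ≤ nu T := by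
  refine le_csSup ⟨‖T‖, ?_⟩ ⟨x, f, hx, hf, hfx, rfl⟩
  rintro _ ⟨y, g, hy, hg, -, rfl⟩
  calc |g (T y)| ≤ ‖g‖ * ‖T y‖ := g.le_opNorm _
    _ = ‖T y‖ := by rw [hg, one_mul]
    _ ≤ ‖T‖ := T.unit_le_opNorm y hy.le

lemma abs_apply_le_nu_mul_norm {z : Z} {f : Z →L[ℝ] ℝ} (hf : ‖f‖ = 1) (hfz : f z = ‖z‖) :
    |f (T z)| ≤ nu T * ‖z‖ := by
  rcases eq_or_ne z 0 with rfl | hz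
  · simp
  have hpos : 0 < ‖z‖ := norm_pos_iff.mpr hz
  have hunit : |f (T (‖z‖⁻¹ • z))| ≤ nu T :=
    abs_apply_le_nu T (norm_smul_inv_norm hz) hf
      (by rw [map_smul, hfz, smul_eq_mul, inv_mul_cancel₀ hpos.ne'])
  rwa [map_smul, map_smul, smul_eq_mul, abs_mul, abs_of_pos (inv_pos.mpr hpos),
    inv_mul_le_iff₀' hpos] at hunit

lemma norm_le_norm_add_smul_add_nu (t : ℝ) (z : Z) :
    ‖z‖ ≤ ‖z + t • T z‖ + |t| * nu T * ‖z‖ := by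
  rcases eq_or_ne z 0 with rfl | hz
  · simp
  obtain ⟨f, hf, hfz⟩ := exists_dual_vector ℝ z (norm_ne_zero_iff.mpr hz)
  replace hfz : f z = ‖z‖ := hfz
  have hsum : f (z + t • T z) ≤ ‖z + t • T z‖ :=
    (le_abs_self _).trans (f.le_of_opNorm_le_of_le hf.le le_rfl |>.trans_eq (one_mul _))
  have hpert : -(t * f (T z)) ≤ |t| * nu T * ‖z‖ :=
    calc -(t * f (T z)) ≤ |t * f (T z)| := neg_le_abs _
      _ = |t| * |f (T z)| := abs_mul _ _
      _ ≤ |t| * (nu T * ‖z‖) := by gcongr; exact abs_apply_le_nu_mul_norm T hf hfz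
      _ = |t| * nu T * ‖z‖ := (mul_assoc _ _ _).symm
  rw [map_add, map_smul, smul_eq_mul, hfz] at hsum
  linarith

variable {T}

-- Apply `h` to `-t` and `u = x + t T x`: the first-order terms cancel in `u - t T u = x - t² T² x`.
lemma mul_apply_le_of_forall_norm_le {c : ℝ} (hc : 0 ≤ c)
    (h : ∀ (t : ℝ) (z : Z), ‖z‖ ≤ ‖z + t • T z‖ + |t| * c * ‖z‖)
    {x : Z} {f : Z →L[ℝ] ℝ} (hx : ‖x‖ = 1) (hf : ‖f‖ = 1) (hfx : f x = 1) (t : ℝ) :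
    t * f (T x) ≤ |t| * c + t ^ 2 * (‖T‖ ^ 2 + c * ‖T‖) := by
  set u := x + t • T x with hu
  have hTx : ‖T x‖ ≤ ‖T‖ := T.unit_le_opNorm x hx.le
  have hlower : 1 + t * f (T x) ≤ ‖u‖ :=
    calc 1 + t * f (T x) = f u := by rw [hu, map_add, map_smul, hfx, smul_eq_mul]
      _ ≤ ‖f u‖ := Real.le_norm_self _
      _ ≤ ‖u‖ := (f.le_of_opNorm_le hf.le u).trans_eq (one_mul _)
  have hupper : ‖u‖ ≤ 1 + |t| * ‖T‖ :=
    calc ‖u‖ ≤ ‖x‖ + ‖t • T x‖ := norm_add_le _ _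
      _ ≤ 1 + |t| * ‖T‖ := by rw [hx, norm_smul, Real.norm_eq_abs]; gcongr
  have hcancel : u + (-t) • T u = x - t ^ 2 • T (T x) := by
    rw [hu, map_add, map_smul]; module
  have hsecond : ‖u + (-t) • T u‖ ≤ 1 + t ^ 2 * ‖T‖ ^ 2 :=
    calc ‖u + (-t) • T u‖ ≤ ‖x‖ + ‖t ^ 2 • T (T x)‖ := hcancel ▸ norm_sub_le _ _
      _ = 1 + t ^ 2 * ‖T (T x)‖ := by rw [hx, norm_smul, Real.norm_of_nonneg (sq_nonneg t)]
      _ ≤ 1 + t ^ 2 * (‖T‖ * ‖T‖) := by gcongr; exact T.le_of_opNorm_le_of_le le_rfl hTx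
      _ = 1 + t ^ 2 * ‖T‖ ^ 2 := by rw [sq ‖T‖]
  have hchain : 1 + t * f (T x) ≤ 1 + t ^ 2 * ‖T‖ ^ 2 + |t| * c * (1 + |t| * ‖T‖) :=
    calc 1 + t * f (T x) ≤ ‖u‖ := hlower
      _ ≤ ‖u + (-t) • T u‖ + |t| * c * ‖u‖ := by simpa only [abs_neg] using h (-t) u
      _ ≤ 1 + t ^ 2 * ‖T‖ ^ 2 + |t| * c * (1 + |t| * ‖T‖) := by gcongr
  linear_combination hchain + c * ‖T‖ * sq_abs t

theorem nu_le_iff {c : ℝ} (hc : 0 ≤ c) :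
    nu T ≤ c ↔ ∀ (t : ℝ) (z : Z), ‖z‖ ≤ ‖z + t • T z‖ + |t| * c * ‖z‖ := by
  refine ⟨fun hT t z => (norm_le_norm_add_smul_add_nu T t z).trans (by gcongr),
    fun h => Real.sSup_le ?_ hc⟩
  rintro _ ⟨x, f, hx, hf, hfx, rfl⟩
  exact abs_le_of_forall_mul_le_abs_mul_add_sq (mul_apply_le_of_forall_norm_le hc h hx hf hfx)

end NumericalRadius

section Approximation

variable {Z : Type*} [NormedAddCommGroup Z] [NormedSpace ℝ Z] {T : Z →L[ℝ] Z}

lemma nu_le_nu_of_semiconj {Y : Type*} [NormedAddCommGroup Y] [NormedSpace ℝ Y]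
    {S : Y →L[ℝ] Y} (e : Y →ₗᵢ[ℝ] Z) (he : Function.Semiconj e S T) : nu S ≤ nu T := by
  refine (nu_le_iff (nu_nonneg T)).mpr fun t y => ?_
  simpa only [← he.eq, ← map_smul, ← map_add, e.norm_map] using
    norm_le_norm_add_smul_add_nu T t (e y)

theorem isLUB_range_nu_of_dense {ι : Type*} {Y : ι → Submodule ℝ Z}
    (hdense : Dense (⋃ i, (Y i : Set Z))) {S : ∀ i, Y i →L[ℝ] Y i}
    (hS : ∀ i (y : Y i), (S i y : Z) = T y) :
    IsLUB (Set.range fun i => nu (S i)) (nu T) := by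
  refine ⟨Set.forall_mem_range.mpr fun i => nu_le_nu_of_semiconj (Y i).subtypeₗᵢ (hS i),
    fun c hub => ?_⟩
  have hle : ∀ i, nu (S i) ≤ c := Set.forall_mem_range.mp hub
  obtain ⟨i₀, -⟩ := Set.mem_iUnion.mp hdense.nonempty.some_mem
  have hc : 0 ≤ c := (nu_nonneg (S i₀)).trans (hle i₀)
  refine (nu_le_iff hc).mpr fun t => ?_
  have hclosed : IsClosed {z : Z | ‖z‖ ≤ ‖z + t • T z‖ + |t| * c * ‖z‖} :=
    isClosed_le (by fun_prop) (by fun_prop)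
  refine fun z => hclosed.closure_subset_iff.mpr (Set.iUnion_subset fun i y hy => ?_) (hdense z)
  simpa only [Set.mem_ofPred_eq, Submodule.coe_norm, Submodule.coe_add, Submodule.coe_smul, hS]
    using (nu_le_iff hc).mp (hle i) t ⟨y, hy⟩

theorem tendsto_nu_of_monotone_of_dense {ι : Type*} [Preorder ι] {Y : ι → Submodule ℝ Z}
    (hmono : Monotone Y) (hdense : Dense (⋃ i, (Y i : Set Z))) {S : ∀ i, Y i →L[ℝ] Y i}
    (hS : ∀ i (y : Y i), (S i y : Z) = T y) :
    Tendsto (fun i => nu (S i)) atTop (𝓝 (nu T)) := by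
  refine tendsto_atTop_isLUB (fun i j hij => ?_) (isLUB_range_nu_of_dense hdense hS)
  let inclusion : Y i →ₗᵢ[ℝ] Y j := ⟨Submodule.inclusion (hmono hij), fun _ => rfl⟩
  exact nu_le_nu_of_semiconj inclusion fun y =>
    Subtype.ext ((hS i y).trans (hS j (inclusion y)).symm)

end Approximation

section Projections

variable {Xm : ℕ → Submodule ℝ X} {P : ∀ m, Xm (m + 1) →L[ℝ] Xm m}

lemma QQ_eq_of_le (hmono : Monotone Xm)
    (hPid : ∀ (m : ℕ) (y : Xm (m + 1)), (y : X) ∈ Xm m → ((P m y : Xm m) : X) = (y : X))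
    {m j k : ℕ} (hjk : j ≤ k) {x : X} (hj : x ∈ Xm (m + j)) (hk : x ∈ Xm (m + k)) :
    QQ Xm P m k ⟨x, hk⟩ = QQ Xm P m j ⟨x, hj⟩ := by
  induction k, hjk using Nat.le_induction with
  | base => rfl
  | succ k hjk ih =>
    have hk' : x ∈ Xm (m + k) := hmono (Nat.add_le_add_left hjk m) hj
    have hP : P (m + k) ⟨x, hk⟩ = ⟨x, hk'⟩ := Subtype.ext (hPid (m + k) ⟨x, hk⟩ hk')
    calc QQ Xm P m (k + 1) ⟨x, hk⟩ = QQ Xm P m k (P (m + k) ⟨x, hk⟩) := rfl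
      _ = QQ Xm P m k ⟨x, hk'⟩ := by rw [hP]
      _ = QQ Xm P m j ⟨x, hj⟩ := ih hk'

lemma QQ_eq_of_eventually_eq (hmono : Monotone Xm)
    (hPid : ∀ (m : ℕ) (y : Xm (m + 1)), (y : X) ∈ Xm m → ((P m y : Xm m) : X) = (y : X))
    {m j : ℕ} (x : Xm (m + j)) {y : Xm m}
    (hy : ∀ᶠ k in atTop, ∃ h : (x : X) ∈ Xm (m + k), QQ Xm P m k ⟨x, h⟩ = y) :
    QQ Xm P m j x = y := by
  obtain ⟨k, ⟨hk, hky⟩, hjk⟩ := (hy.and (eventually_ge_atTop j)).exists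
  exact (QQ_eq_of_le hmono hPid hjk x.2 hk).symm.trans hky

end Projections

theorem stmt14_general
    (Xm : ℕ → Submodule ℝ X) (hmono : Monotone Xm)
    (hdense : Dense (⋃ m, (Xm m : Set X)))
    (P : ∀ m, Xm (m + 1) →L[ℝ] Xm m)
    (hPid : ∀ (m : ℕ) (y : Xm (m + 1)), (y : X) ∈ Xm m → ((P m y : Xm m) : X) = (y : X))
    (m : ℕ) (Qm : X →L[ℝ] Xm m)
    (hQlim : ∀ (k : ℕ) (x : X), x ∈ Xm k → ∃ J : ℕ, ∀ j, J ≤ j →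
      ∃ h : x ∈ Xm (m + j), QQ Xm P m j ⟨x, h⟩ = Qm x)
    (L : Xm m →L[ℝ] Xm m) :
    Tendsto (fun j => w Xm hmono P m j L) atTop
      (𝓝 (nu ((Xm m).subtypeL.comp (L.comp Qm)))) := by
  have hQ : ∀ j (x : Xm (m + j)), QQ Xm P m j x = Qm x := fun j x =>
    QQ_eq_of_eventually_eq hmono hPid x (eventually_atTop.mpr (hQlim (m + j) x x.2))
  have hmono' : Monotone fun j => Xm (m + j) := fun _ _ hij => hmono (Nat.add_le_add_left hij m)
  have hdense' : Dense (⋃ j, (Xm (m + j) : Set X)) :=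
    hdense.mono (Set.iUnion_mono fun k => hmono (Nat.le_add_left k m))
  exact tendsto_nu_of_monotone_of_dense hmono' hdense' fun j x =>
    congrArg (fun y => (L y : X)) (hQ j x)

/-- Under the LCC setup, the sequence `j ↦ w_{m+j}(L)` converges to `ν(ι ∘ L ∘ Q_m)`,
the numerical radius in `X` of `x ↦ L (Q_m x)`. -/
theorem stmt14 [CompleteSpace X]
    (Xm : ℕ → Submodule ℝ X) (hmono : Monotone Xm)
    (hclosed : ∀ m, IsClosed (Xm m : Set X))
    (hdense : Dense (⋃ m, (Xm m : Set X)))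
    (P : ∀ m, Xm (m + 1) →L[ℝ] Xm m)
    (hPnorm : ∀ m, ‖P m‖ = 1)
    (hPid : ∀ (m : ℕ) (y : Xm (m + 1)), (y : X) ∈ Xm m → ((P m y : Xm m) : X) = (y : X))
    (m : ℕ) (Qm : X →L[ℝ] Xm m) (hQnorm : ‖Qm‖ = 1)
    (hQid : ∀ x : X, x ∈ Xm m → ((Qm x : X) = x))
    (hQlim : ∀ (k : ℕ) (x : X), x ∈ Xm k → ∃ J : ℕ, ∀ j, J ≤ j →
      ∃ h : x ∈ Xm (m + j), QQ Xm P m j ⟨x, h⟩ = Qm x)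
    (L : Xm m →L[ℝ] Xm m) :
    Tendsto (fun j => w Xm hmono P m j L) atTop
      (𝓝 (nu ((Xm m).subtypeL.comp (L.comp Qm)))) :=
  stmt14_general Xm hmono hdense P hPid m Qm hQlim L
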